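/- arXiv:math/0009183 — 2 statements merged into one kernel-verified Lean document; each statement's English description precedes it below -/
import Mathlib

section
/- Suppose the Y(gl_n)-module L(λ^{(1)})⊗L(λ^{(2)})⊗⋯⊗L(λ^{(k)}) is irreducible, where λ^{(1)},…,λ^{(k)} are gl_n-highest weights. Then for every permutation σ of {1,…,k} there exists a linear isomorphism L(λ^{(1)})⊗⋯⊗L(λ^{(k)}) → L(λ^{(σ(1))})⊗⋯⊗L(λ^{(σ(k))}) intertwining the actions of all the Yangian generators t_{ij}^{(r)}; i.e., any permutation of the tensor factors gives an isomorphic representation of Y(gl_n). -/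
open scoped TensorProduct

/-- An `n`-tuple of complex numbers is a `gl_n`-highest weight if the consecutive
differences `λ_i - λ_{i+1}` are non-negative integers. -/
def IsGLHighestWeight (n : ℕ) (lam : Fin n → ℂ) : Prop :=
  ∀ i : Fin n, ∀ h : (i : ℕ) + 1 < n, ∃ N : ℕ, lam i - lam ⟨(i : ℕ) + 1, h⟩ = N

/-- A realization of the irreducible finite-dimensional `gl_n`-module `L(λ)`
with highest weight `lam`, given by the action of the matrix units `E i j`. -/
structure GLRep (n : ℕ) (lam : Fin n → ℂ) where
  V : Type
  [instAddCommGroup : AddCommGroup V]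
  [instModule : Module ℂ V]
  [instFiniteDimensional : FiniteDimensional ℂ V]
  E : Fin n → Fin n → (V →ₗ[ℂ] V)
  commRel : ∀ i j k l : Fin n,
    E i j ∘ₗ E k l - E k l ∘ₗ E i j
      = (if j = k then E i l else 0) - (if l = i then E k j else 0)
  hv : V
  hv_ne : hv ≠ 0
  hv_upper : ∀ i j : Fin n, i < j → E i j hv = 0
  hv_diag : ∀ i : Fin n, E i i hv = lam i • hv
  irreducible : ∀ U : Submodule ℂ V,
    (∀ i j : Fin n, ∀ v ∈ U, E i j v ∈ U) → U = ⊥ ∨ U = ⊤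

attribute [instance] GLRep.instAddCommGroup GLRep.instModule GLRep.instFiniteDimensional

/-- The action of the Yangian generator `t_{ij}^{(1)}` on `L(λ) ⊗ L(μ)`
(both evaluation modules evaluated at `0`). -/
noncomputable def t1 {n : ℕ} {lam mu : Fin n → ℂ} (A : GLRep n lam) (B : GLRep n mu)
    (i j : Fin n) : A.V ⊗[ℂ] B.V →ₗ[ℂ] A.V ⊗[ℂ] B.V :=
  TensorProduct.map (A.E i j) LinearMap.id + TensorProduct.map LinearMap.id (B.E i j)

/-- The action of the Yangian generator `t_{ij}^{(2)}` on `L(λ) ⊗ L(μ)`. -/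
noncomputable def t2 {n : ℕ} {lam mu : Fin n → ℂ} (A : GLRep n lam) (B : GLRep n mu)
    (i j : Fin n) : A.V ⊗[ℂ] B.V →ₗ[ℂ] A.V ⊗[ℂ] B.V :=
  ∑ a : Fin n, TensorProduct.map (A.E i a) (B.E a j)

/-- Irreducibility of `L(λ) ⊗ L(μ)` as a module over the Yangian `Y(gl_n)`:
the only subspaces invariant under all the operators `t1` and `t2`
(the generators `t_{ij}^{(r)}` with `r ≥ 3` acting as zero) are `⊥` and `⊤`. -/
def YangianIrred2 {n : ℕ} {lam mu : Fin n → ℂ} (A : GLRep n lam) (B : GLRep n mu) : Prop :=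
  ∀ U : Submodule ℂ (A.V ⊗[ℂ] B.V),
    (∀ i j : Fin n, ∀ v ∈ U, t1 A B i j v ∈ U) →
    (∀ i j : Fin n, ∀ v ∈ U, t2 A B i j v ∈ U) →
    U = ⊥ ∨ U = ⊤

attribute [local instance] Classical.propDecidable

/-- The action of the Yangian generator `t_{ij}^{(r)}` on the tensor product
`L(λ^{(1)}) ⊗ ⋯ ⊗ L(λ^{(k)})` of evaluation modules (all evaluated at `0`):
the sum over `1 ≤ p_1 < ⋯ < p_r ≤ k` and over all sequences
`i = a_0, a_1, …, a_r = j` of the operator acting by `E_{a_{s−1} a_s}` in the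
`p_s`-th tensor factor and by the identity in the remaining factors
(the empty sum, hence `0`, when `r > k`). -/
noncomputable def tMulti {k n : ℕ} {lam : Fin k → Fin n → ℂ}
    (M : ∀ p : Fin k, GLRep n (lam p)) (r : ℕ) (i j : Fin n) :
    (⨂[ℂ] p : Fin k, (M p).V) →ₗ[ℂ] ⨂[ℂ] p : Fin k, (M p).V :=
  ∑ p : {p : Fin r → Fin k // StrictMono p},
    ∑ a : {g : Fin (r + 1) → Fin n // g 0 = i ∧ g (Fin.last r) = j},
      PiTensorProduct.map fun q : Fin k =>
        if h : ∃ s : Fin r, p.1 s = q then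
          (M q).E (a.1 h.choose.castSucc) (a.1 h.choose.succ)
        else LinearMap.id

/-- Irreducibility of `L(λ^{(1)}) ⊗ ⋯ ⊗ L(λ^{(k)})` as a `Y(gl_n)`-module:
the only subspaces invariant under the action of all generators `t_{ij}^{(r)}`,
`r ≥ 1`, are `⊥` and `⊤`. -/
def YangianIrredMulti {k n : ℕ} {lam : Fin k → Fin n → ℂ}
    (M : ∀ p : Fin k, GLRep n (lam p)) : Prop :=
  ∀ U : Submodule ℂ (⨂[ℂ] p : Fin k, (M p).V),
    (∀ r : ℕ, 1 ≤ r → ∀ i j : Fin n, ∀ v ∈ U, tMulti M r i j v ∈ U) →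
    U = ⊥ ∨ U = ⊤

/-!
Let `T` be the irreducible tensor product and `T'` the permuted one. Both are modules over the
Yangian because the generating series of the `t_{ij}^{(r)}` is a product of commuting solutions
`1 + x E` of the `RTT`-relation, and the Yangian relations say that the `t_{ij}^{(r)}` commute up to
terms of lower degree. The tensor products `ξ ∈ T` and `ξ' ∈ T'` of the highest vectors are highest
vectors of the same weight, the coefficients of `∏ p, (1 + λ_i^{(p)} x)`, which do not depend on the
order of the factors. There are also functionals `f` and `f'`, normalized at `ξ` and `ξ'`, which
vanish on the images of all `t_{ij}^{(r)}` with `j < i`.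

Reordering monomials shows that `f - f'` vanishes on the cyclic submodule of `T ⊕ T'` generated by
`(ξ, ξ')`. Hence this submodule does not contain `(ξ, 0)`, and as `T` is irreducible and `T'` has
the same dimension, it is the graph of an isomorphism.
-/

section AlmostCommuting

variable {R A ι : Type*} [CommRing R] [Ring A] [Algebra R A]

variable (R) in
/-- The span of all products `a x₁ * ⋯ * a xₘ` whose total degree `deg x₁ + ⋯ + deg xₘ` is less
than `d`: the filtration by degree of the algebra generated by the family `a`. -/
def wordSpan (a : ι → A) (deg : ι → ℕ) (d : ℕ) : Submodule R A :=
  Submodule.span R {y | ∃ w : List ι, (w.map deg).sum < d ∧ (w.map a).prod = y}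

variable (R) in
/-- The commutator of two generators has lower degree than their product, so that the associated
graded algebra of the filtration `wordSpan` is commutative. -/
def AlmostCommute (a : ι → A) (deg : ι → ℕ) : Prop :=
  ∀ x y, a x * a y - a y * a x ∈ wordSpan R a deg (deg x + deg y)

variable {a : ι → A} {deg : ι → ℕ}

theorem prod_mem_wordSpan {w : List ι} {d : ℕ} (hw : (w.map deg).sum < d) :
    (w.map a).prod ∈ wordSpan R a deg d :=
  Submodule.subset_span ⟨w, hw, rfl⟩

theorem prod_mul_mem_wordSpan (u : List ι) {d : ℕ} {y : A} (hy : y ∈ wordSpan R a deg d) :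
    (u.map a).prod * y ∈ wordSpan R a deg ((u.map deg).sum + d) := by
  suffices wordSpan R a deg d ≤ (wordSpan R a deg _).comap (LinearMap.mulLeft R (u.map a).prod) from
    this hy
  refine Submodule.span_le.2 ?_
  rintro _ ⟨w, hw, rfl⟩
  simpa using prod_mem_wordSpan (R := R) (a := a) (deg := deg) (w := u ++ w)
    (d := (u.map deg).sum + d) (by simpa using hw)

theorem mul_prod_mem_wordSpan (u : List ι) {d : ℕ} {y : A} (hy : y ∈ wordSpan R a deg d) :
    y * (u.map a).prod ∈ wordSpan R a deg (d + (u.map deg).sum) := by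
  suffices wordSpan R a deg d ≤ (wordSpan R a deg _).comap (LinearMap.mulRight R (u.map a).prod)
    from this hy
  refine Submodule.span_le.2 ?_
  rintro _ ⟨w, hw, rfl⟩
  simpa using prod_mem_wordSpan (R := R) (a := a) (deg := deg) (w := w ++ u)
    (d := d + (u.map deg).sum) (by simpa using hw)

theorem AlmostCommute.prod_sub_prod_mem (h : AlmostCommute R a deg) {w w' : List ι}
    (hw : w.Perm w') : (w.map a).prod - (w'.map a).prod ∈ wordSpan R a deg (w.map deg).sum := by
  induction hw with
  | nil => simp
  | cons x _ ih => simpa [mul_sub] using prod_mul_mem_wordSpan [x] ih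
  | swap x y u => simpa [sub_mul, mul_assoc, add_assoc] using mul_prod_mem_wordSpan u (h y x)
  | trans huv _ ih₁ ih₂ =>
    rw [← (huv.map deg).sum_eq] at ih₂
    simpa using add_mem ih₁ ih₂

end AlmostCommuting

section CyclicSpan

variable {R M N ι : Type*} [CommRing R] [AddCommGroup M] [Module R M] [AddCommGroup N] [Module R N]

/-- The smallest subspace which contains `η` and is stable under all operators `a x`. -/
def cyclicSpan (a : ι → Module.End R M) (η : M) : Submodule R M :=
  Submodule.span R (Set.range fun w : List ι => (w.map a).prod η)

variable {a : ι → Module.End R M} {η : M}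

theorem mem_cyclicSpan_self : η ∈ cyclicSpan a η :=
  Submodule.subset_span ⟨[], by simp⟩

theorem apply_mem_cyclicSpan (x : ι) {v : M} (hv : v ∈ cyclicSpan a η) :
    a x v ∈ cyclicSpan a η := by
  suffices cyclicSpan a η ≤ (cyclicSpan a η).comap (a x) from this hv
  refine Submodule.span_le.2 ?_
  rintro _ ⟨w, rfl⟩
  exact Submodule.subset_span ⟨x :: w, by simp⟩

theorem exists_prod_apply_eq_smul {w : List ι} (hw : ∀ x ∈ w, ∃ c : R, a x η = c • η) :
    ∃ c : R, (w.map a).prod η = c • η := by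
  induction w with
  | nil => exact ⟨1, by simp⟩
  | cons x w ih =>
    obtain ⟨c, hc⟩ := ih fun y hy => hw y (List.mem_cons_of_mem x hy)
    obtain ⟨d, hd⟩ := hw x List.mem_cons_self
    exact ⟨c * d, by simp [hc, hd, smul_smul]⟩

theorem AlmostCommute.apply_prod_eq_zero {deg : ι → ℕ} (h : AlmostCommute R a deg) {g : M →ₗ[R] N}
    (ha : ∀ x, (∃ c : R, a x η = c • η) ∨ g ∘ₗ a x = 0) (hg : g η = 0) (w : List ι) :
    g ((w.map a).prod η) = 0 := by
  induction hd : (w.map deg).sum using Nat.strong_induction_on generalizing w with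
  | _ d ih =>
  have vanish_of_lower : wordSpan R a deg d ≤ LinearMap.ker (g ∘ₗ LinearMap.applyₗ η) := by
    refine Submodule.span_le.2 ?_
    rintro _ ⟨u, hu, rfl⟩
    exact ih _ hu u rfl
  by_cases hw : ∃ x ∈ w, g ∘ₗ a x = 0
  · -- Modulo words of smaller degree, a letter killed by `g` may be moved to the front of the word.
    obtain ⟨x, hx, hgx⟩ := hw
    have hsub := vanish_of_lower (hd ▸ h.prod_sub_prod_mem (List.perm_cons_erase hx))
    have hfront : g (((x :: w.erase x).map a).prod η) = 0 := by
      simpa using LinearMap.congr_fun hgx (((w.erase x).map a).prod η)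
    simpa [hfront, -List.map_cons, -List.prod_cons] using hsub
  · push Not at hw
    obtain ⟨c, hc⟩ := exists_prod_apply_eq_smul fun x hx => (ha x).resolve_right (hw x hx)
    rw [hc, map_smul, hg, smul_zero]

theorem AlmostCommute.cyclicSpan_le_ker {deg : ι → ℕ} (h : AlmostCommute R a deg) {g : M →ₗ[R] N}
    (ha : ∀ x, (∃ c : R, a x η = c • η) ∨ g ∘ₗ a x = 0) (hg : g η = 0) :
    cyclicSpan a η ≤ LinearMap.ker g := by
  refine Submodule.span_le.2 ?_
  rintro _ ⟨w, rfl⟩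
  exact h.apply_prod_eq_zero ha hg w

end CyclicSpan

section Irreducible

variable {K T T' ι : Type*} [Field K] [AddCommGroup T'] [Module K T'] [AddCommGroup T] [Module K T]

/-- Only the trivial subspaces are stable under all operators `a x`. Unlike for a simple module,
the zero space is allowed. -/
def ActsIrreducibly (a : ι → Module.End K T) : Prop :=
  ∀ U : Submodule K T, (∀ x, ∀ v ∈ U, a x v ∈ U) → U = ⊥ ∨ U = ⊤

theorem ActsIrreducibly.cyclicSpan_eq_top {a : ι → Module.End K T} (ha : ActsIrreducibly a) {η : T}
    (hη : η ≠ 0) : cyclicSpan a η = ⊤ := by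
  refine (ha _ fun x _ => apply_mem_cyclicSpan x).resolve_left fun hbot => hη ?_
  simpa [hbot] using mem_cyclicSpan_self (a := a) (η := η)

theorem exists_linearEquiv_graph_eq_of_finrank_eq [FiniteDimensional K T] [FiniteDimensional K T']
    (hdim : Module.finrank K T = Module.finrank K T') {N : Submodule K (T × T')}
    (hfst : N.map (LinearMap.fst K T T') = ⊤) (hinl : N.comap (LinearMap.inl K T T') = ⊥) :
    ∃ φ : T ≃ₗ[K] T', N = φ.toLinearMap.graph := by
  have surjective_fst : Function.Surjective (LinearMap.fst K T T' ∘ₗ N.subtype) := by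
    rwa [← LinearMap.range_eq_top, LinearMap.range_comp, Submodule.range_subtype]
  have injective_snd : Function.Injective (LinearMap.snd K T T' ∘ₗ N.subtype) := by
    rw [← LinearMap.ker_eq_bot, LinearMap.ker_eq_bot']
    rintro ⟨⟨v, v'⟩, hv⟩ (rfl : v' = 0)
    have : v ∈ N.comap (LinearMap.inl K T T') := hv
    rw [hinl, Submodule.mem_bot] at this
    simp [this]
  have le_finrank := LinearMap.finrank_le_finrank_of_surjective surjective_fst
  have finrank_le := LinearMap.finrank_le_finrank_of_injective injective_snd
  exact Submodule.exists_equiv_eq_graph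
    ⟨(LinearMap.injective_iff_surjective_of_finrank_eq_finrank (by omega)).2 surjective_fst,
      surjective_fst⟩
    ⟨injective_snd,
      (LinearMap.injective_iff_surjective_of_finrank_eq_finrank (by omega)).1 injective_snd⟩

theorem ActsIrreducibly.exists_equiv_of_stable_submodule
    [FiniteDimensional K T] [FiniteDimensional K T']
    (hdim : Module.finrank K T = Module.finrank K T') {a : ι → Module.End K T}
    {a' : ι → Module.End K T'} (ha : ActsIrreducibly a) {N : Submodule K (T × T')}
    (hN : ∀ x, ∀ v ∈ N, ((a x).prodMap (a' x)) v ∈ N) {v₀ : T × T'} (hv₀ : v₀ ∈ N) (hne : v₀.1 ≠ 0)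
    {v₁ : T} (hv₁ : (v₁, 0) ∉ N) :
    ∃ φ : T ≃ₗ[K] T', ∀ x v, φ (a x v) = a' x (φ v) := by
  have hfst : N.map (LinearMap.fst K T T') = ⊤ := by
    refine (ha _ ?_).resolve_left fun hbot => hne ?_
    · rintro x _ ⟨v, hv, rfl⟩
      exact ⟨_, hN x v hv, rfl⟩
    · simpa [hbot] using Submodule.mem_map_of_mem (f := LinearMap.fst K T T') hv₀
  have hinl : N.comap (LinearMap.inl K T T') = ⊥ := by
    refine (ha _ fun x v hv => ?_).resolve_right fun htop => hv₁ ?_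
    · simpa using hN x _ hv
    · simpa using htop.ge (Submodule.mem_top (x := v₁))
  obtain ⟨φ, rfl⟩ := exists_linearEquiv_graph_eq_of_finrank_eq hdim hfst hinl
  exact ⟨φ, fun x v => (hN x (v, φ v) rfl).symm⟩

end Irreducible

section YangianRelations

variable {n : Type*} [DecidableEq n] {A : Type*} [Ring A]

/-- The defining relations of the Yangian `Y(gl_n)` in terms of the generators
`t_{ij}^{(r)}`, collected into the matrices `t r`. -/
structure YangianRelations (t : ℕ → Matrix n n A) : Prop where
  zero : t 0 = 1
  comm : ∀ (r s : ℕ) (i j k l : n),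
    (t (r + 1) i j * t s k l - t s k l * t (r + 1) i j)
      - (t r i j * t (s + 1) k l - t (s + 1) k l * t r i j)
      = t r k j * t s i l - t s k j * t r i l

variable {R : Type*} [CommRing R]

-- The relation trades `[t^{(r+1)}, t^{(s)}]` for `[t^{(r)}, t^{(s+1)}]` up to terms of total degree
-- `r + s`, until the first exponent is `0`.
theorem YangianRelations.almostCommute [Algebra R A] {t : ℕ → Matrix n n A}
    (ht : YangianRelations t) :
    AlmostCommute R (fun x : ℕ × n × n => t x.1 x.2.1 x.2.2) Prod.fst := by
  suffices h : ∀ r s i j k l, t r i j * t s k l - t s k l * t r i j ∈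
      wordSpan R (fun x : ℕ × n × n => t x.1 x.2.1 x.2.2) Prod.fst (r + s) from
    fun x y => h x.1 y.1 x.2.1 x.2.2 y.2.1 y.2.2
  intro r
  induction r with
  | zero =>
    intro s i j k l
    rw [ht.zero, Matrix.one_apply]
    split_ifs <;> simp
  | succ r ih =>
    intro s i j k l
    have mul_mem {r' s' : ℕ} (hrs : r' + s' = r + s) (i j k l : n) : t r' i j * t s' k l ∈
        wordSpan R (fun x : ℕ × n × n => t x.1 x.2.1 x.2.2) Prod.fst (r + 1 + s) := by
      simpa using prod_mem_wordSpan (R := R) (a := fun x : ℕ × n × n => t x.1 x.2.1 x.2.2)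
        (deg := Prod.fst) (w := [(r', i, j), (s', k, l)]) (d := r + 1 + s) (by simp; omega)
    rw [sub_eq_iff_eq_add.1 (ht.comm r s i j k l)]
    refine add_mem (sub_mem (mul_mem rfl _ _ _ _) (mul_mem (add_comm _ _) _ _ _ _)) ?_
    rw [add_right_comm, add_assoc]
    exact ih (s + 1) i j k l

theorem YangianRelations.prodMap {M N : Type*} [AddCommGroup M] [Module R M] [AddCommGroup N]
    [Module R N] {t : ℕ → Matrix n n (Module.End R M)} {u : ℕ → Matrix n n (Module.End R N)}
    (ht : YangianRelations t) (hu : YangianRelations u) :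
    YangianRelations fun r => Matrix.of fun i j => (t r i j).prodMap (u r i j) where
  zero := by
    ext i j : 1
    rcases eq_or_ne i j with rfl | hij
    · simp [ht.zero, hu.zero, Module.End.one_eq_id]
    · simp [ht.zero, hu.zero, hij]
  comm r s i j k l := by
    refine LinearMap.ext fun x => Prod.ext ?_ ?_
    · exact LinearMap.congr_fun (ht.comm r s i j k l) x.1
    · exact LinearMap.congr_fun (hu.comm r s i j k l) x.2

end YangianRelations

section HighestWeight

variable {n : Type*} {R M : Type*} [CommRing R] [AddCommGroup M] [Module R M]

/-- `ξ` is a highest vector of weight `c` for the matrix of operators `m`, and the functional `f`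
kills everything in the image of the lowering operators `m i j`, `j < i`. -/
structure IsHighestWeightAction [LT n] (m : Matrix n n (Module.End R M)) (ξ : M)
    (f : M →ₗ[R] R) (c : n → R) : Prop where
  raise : ∀ i j, i < j → m i j ξ = 0
  diag : ∀ i, m i i ξ = c i • ξ
  lower : ∀ i j, j < i → ∀ v, f (m i j v) = 0

namespace IsHighestWeightAction

variable {m m' : Matrix n n (Module.End R M)} {ξ : M} {f : M →ₗ[R] R} {c c' : n → R}

theorem one [Preorder n] [DecidableEq n] :
    IsHighestWeightAction (1 : Matrix n n (Module.End R M)) ξ f 1 where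
  raise i j hij := by simp [hij.ne]
  diag i := by simp
  lower i j hij v := by simp [hij.ne']

theorem sum [LT n] {ι : Type*} {s : Finset ι} {m : ι → Matrix n n (Module.End R M)}
    {c : ι → n → R} (h : ∀ p ∈ s, IsHighestWeightAction (m p) ξ f (c p)) :
    IsHighestWeightAction (∑ p ∈ s, m p) ξ f (∑ p ∈ s, c p) where
  raise i j hij := by
    simpa [Matrix.sum_apply] using Finset.sum_eq_zero fun p hp => (h p hp).raise i j hij
  diag i := by
    simpa [Matrix.sum_apply, Finset.sum_smul] using Finset.sum_congr rfl fun p hp => (h p hp).diag i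
  lower i j hij v := by
    simpa [Matrix.sum_apply] using Finset.sum_eq_zero fun p hp => (h p hp).lower i j hij v

-- In the sum over the middle index the factor which acts trivially may be moved next to the
-- vector or to the functional, because the two matrices have commuting entries.
theorem mul [LinearOrder n] [Fintype n] (h : IsHighestWeightAction m ξ f c)
    (h' : IsHighestWeightAction m' ξ f c')
    (hcomm : ∀ i j k l, Commute (m i j) (m' k l)) :
    IsHighestWeightAction (m * m') ξ f (c * c') where
  raise i j hij := by
    simp only [Matrix.mul_apply, LinearMap.sum_apply]
    refine Finset.sum_eq_zero fun a _ => ?_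
    rcases lt_or_ge a j with haj | hja
    · simp [h'.raise a j haj]
    · simp [(hcomm i a a j).eq, h.raise i a (hij.trans_le hja)]
  diag i := by
    simp only [Matrix.mul_apply, LinearMap.sum_apply]
    rw [Finset.sum_eq_single i]
    · simp [h.diag, h'.diag, smul_smul, mul_comm]
    · intro a _ hai
      rcases hai.lt_or_gt with hai | hia
      · simp [h'.raise a i hai]
      · simp [(hcomm i a a i).eq, h.raise i a hia]
    · simp
  lower i j hij v := by
    simp only [Matrix.mul_apply, LinearMap.sum_apply, map_sum]
    refine Finset.sum_eq_zero fun a _ => ?_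
    rcases lt_or_ge a i with hai | hia
    · simp [h.lower i a hai]
    · simp [(hcomm i a a j).eq, h'.lower a j (hij.trans_le hia)]

end IsHighestWeightAction

theorem exists_equiv_of_highestWeight [LinearOrder n] [DecidableEq n] {K T T' : Type*} [Field K]
    [AddCommGroup T] [Module K T] [FiniteDimensional K T]
    [AddCommGroup T'] [Module K T'] [FiniteDimensional K T']
    (hdim : Module.finrank K T = Module.finrank K T')
    {t : ℕ → Matrix n n (Module.End K T)} {t' : ℕ → Matrix n n (Module.End K T')}
    (ht : YangianRelations t) (ht' : YangianRelations t')
    {ξ : T} {ξ' : T'} {f : T →ₗ[K] K} {f' : T' →ₗ[K] K} {c : ℕ → n → K}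
    (hw : ∀ r, IsHighestWeightAction (t r) ξ f (c r))
    (hw' : ∀ r, IsHighestWeightAction (t' r) ξ' f' (c r))
    (hf : f ξ = 1) (hf' : f' ξ' = 1)
    (hirr : ActsIrreducibly fun x : ℕ × n × n => t x.1 x.2.1 x.2.2) :
    ∃ φ : T ≃ₗ[K] T', ∀ r i j v, φ (t r i j v) = t' r i j (φ v) := by
  let a : ℕ × n × n → Module.End K (T × T') := fun x =>
    (t x.1 x.2.1 x.2.2).prodMap (t' x.1 x.2.1 x.2.2)
  have letters : ∀ x, (∃ d : K, a x (ξ, ξ') = d • (ξ, ξ')) ∨ f.coprod (-f') ∘ₗ a x = 0 := by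
    rintro ⟨r, i, j⟩
    rcases lt_trichotomy i j with hij | rfl | hji
    · exact .inl ⟨0, by simp [a, (hw r).raise i j hij, (hw' r).raise i j hij]⟩
    · exact .inl ⟨c r i, by simp [a, (hw r).diag, (hw' r).diag]⟩
    · exact .inr (LinearMap.ext fun v => by simp [a, (hw r).lower i j hji, (hw' r).lower i j hji])
  have almostCommute : AlmostCommute K a Prod.fst := (ht.prodMap ht').almostCommute
  have functionals_agree : cyclicSpan a (ξ, ξ') ≤ LinearMap.ker (f.coprod (-f')) :=
    almostCommute.cyclicSpan_le_ker letters (by simp [hf, hf'])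
  have hξ : ξ ≠ 0 := fun h => by simp [h] at hf
  have hmem : (ξ, 0) ∉ cyclicSpan a (ξ, ξ') := fun h => by simpa [hf] using functionals_agree h
  obtain ⟨φ, hφ⟩ := hirr.exists_equiv_of_stable_submodule hdim
    (fun x _ => apply_mem_cyclicSpan (a := a) x) mem_cyclicSpan_self hξ hmem
  exact ⟨φ, fun r i j v => hφ (r, i, j) v⟩

end HighestWeight

section RTT

open Polynomial

-- Expanding both sides, everything cancels except multiples of `a * b - b * a`, with coefficients
-- `x * y * (y - x)`, `x ^ 2 * y` and `-(x * y ^ 2)`.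
theorem semiconjBy_one_add_mul_one_add {B : Type*} [Ring B] {x y a b P : B}
    (hx : x ∈ Subring.center B) (hy : y ∈ Subring.center B) (hab : a * b - b * a = a * P - P * a)
    (hPa : P * a = b * P) (hPb : P * b = a * P) :
    SemiconjBy (y - x - x * y * P) ((1 + x * a) * (1 + y * b)) ((1 + y * b) * (1 + x * a)) := by
  lift x to Subring.center B using hx
  lift y to Subring.center B using hy
  have hPab : P * (a * b) = b * (a * P) := by rw [← mul_assoc, hPa, mul_assoc, hPb]
  suffices (y • (1 : B) - x • (1 : B) - (x * y) • P) * ((1 + x • a) * (1 + y • b)) =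
      (1 + y • b) * (1 + x • a) * (y • (1 : B) - x • (1 : B) - (x * y) • P) by
    simpa [SemiconjBy, Subring.smul_def] using this
  rw [hPa] at hab
  simp only [mul_add, add_mul, mul_sub, sub_mul, smul_mul_assoc, mul_smul_comm, smul_smul, one_mul,
    mul_one, mul_assoc, smul_add, smul_sub, hPa, hPb, hPab]
  linear_combination (norm := module) (x * y * (y - x)) • hab

variable {S B : Type*} [Ring S] [Ring B]

/-- The series `φ(T(x))` attached to `T(x)`, for two variables `x` and `y`: the inner variable is
`x` and the outer one is `y`. -/
noncomputable def innerSeries (φ : S →+* B) : S[X] →+* B[X][X] :=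
  C.comp (mapRingHom φ)

/-- The series `ψ(T(y))` attached to `T(x)`, with the variables of `innerSeries`. -/
noncomputable def outerSeries (ψ : S →+* B) : S[X] →+* B[X][X] :=
  (mapRingHom C).comp (mapRingHom ψ)

/-- Yang's `R`-matrix `y - x - x y P`. In the usual spectral parameters `u = x⁻¹` and `v = y⁻¹` it
is proportional to `u - v - P`. -/
noncomputable def yangMatrix (P : B) : B[X][X] :=
  X - C X - C X * X * C (C P)

/-- The `RTT`-relation `R(x, y) T₁(x) T₂(y) = T₂(y) T₁(x) R(x, y)` for the series `T₁ = φ(T)` and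
`T₂ = ψ(T)`. -/
def SatisfiesRTT (φ ψ : S →+* B) (P : B) (T : S[X]) : Prop :=
  SemiconjBy (yangMatrix P) (innerSeries φ T * outerSeries ψ T)
    (outerSeries ψ T * innerSeries φ T)

variable {φ ψ : S →+* B} {P : B}

theorem SatisfiesRTT.mul {T U : S[X]} (hT : SatisfiesRTT φ ψ P T) (hU : SatisfiesRTT φ ψ P U)
    (hTU : Commute (innerSeries φ T) (outerSeries ψ U))
    (hUT : Commute (innerSeries φ U) (outerSeries ψ T)) : SatisfiesRTT φ ψ P (T * U) := by
  have h := SemiconjBy.mul_right hT hU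
  rwa [hUT.symm.mul_mul_mul_comm, hTU.mul_mul_mul_comm, ← map_mul, ← map_mul] at h

theorem SatisfiesRTT.list_prod {l : List S[X]} (hl : ∀ T ∈ l, SatisfiesRTT φ ψ P T)
    (hcomm : l.Pairwise fun T U => Commute (innerSeries φ T) (outerSeries ψ U) ∧
      Commute (innerSeries φ U) (outerSeries ψ T)) : SatisfiesRTT φ ψ P l.prod := by
  induction l with
  | nil => simp [SatisfiesRTT]
  | cons T l ih =>
    rw [List.forall_mem_cons] at hl
    rw [List.pairwise_cons] at hcomm
    rw [List.prod_cons]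
    refine hl.1.mul (ih hl.2 hcomm.2) ?_ ?_ <;> rw [map_list_prod]
    · exact Commute.list_prod_right _ _ (List.forall_mem_map.2 fun U hU => (hcomm.1 U hU).1)
    · exact Commute.list_prod_left _ _ (List.forall_mem_map.2 fun U hU => (hcomm.1 U hU).2)

theorem innerSeries_one_add_X_mul_C (e : S) :
    innerSeries φ (1 + X * C e) = 1 + C X * C (C (φ e)) := by
  simp [innerSeries, -X_mul_C]

theorem outerSeries_one_add_X_mul_C (e : S) :
    outerSeries ψ (1 + X * C e) = 1 + X * C (C (ψ e)) := by
  simp [outerSeries]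

theorem C_X_mem_center : C X ∈ Subring.center B[X][X] := by
  refine Subring.mem_center_iff.2 fun p => ?_
  ext1 s
  rw [coeff_mul_C, coeff_C_mul, X_mul]

theorem satisfiesRTT_one_add_X_mul_C {e : S} (he : φ e * ψ e - ψ e * φ e = φ e * P - P * φ e)
    (hPφ : P * φ e = ψ e * P) (hPψ : P * ψ e = φ e * P) : SatisfiesRTT φ ψ P (1 + X * C e) := by
  have hX : X ∈ Subring.center B[X][X] := Subring.mem_center_iff.2 fun p => X_mul.symm
  rw [SatisfiesRTT, innerSeries_one_add_X_mul_C, outerSeries_one_add_X_mul_C]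
  apply semiconjBy_one_add_mul_one_add C_X_mem_center hX <;> simp only [← C_mul, ← C_sub]
  exacts [congrArg (fun b => C (C b)) he, congrArg (fun b => C (C b)) hPφ,
    congrArg (fun b => C (C b)) hPψ]

theorem commute_innerSeries_outerSeries {e e' : S} (h : Commute (φ e) (ψ e')) :
    Commute (innerSeries φ (1 + X * C e)) (outerSeries ψ (1 + X * C e')) := by
  rw [innerSeries_one_add_X_mul_C, outerSeries_one_add_X_mul_C]
  refine .add_left (.one_left _) (.add_right (.one_right _) (.mul_left ?_ ?_))
  · exact (Subring.mem_center_iff.1 C_X_mem_center _).symm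
  · exact .mul_right (commute_X _).symm (h.map (C.comp C))

theorem coeff_innerSeries_mul_outerSeries (T : S[X]) (r s : ℕ) :
    ((innerSeries φ T * outerSeries ψ T).coeff s).coeff r = φ (T.coeff r) * ψ (T.coeff s) := by
  simp [innerSeries, outerSeries]

theorem coeff_outerSeries_mul_innerSeries (T : S[X]) (r s : ℕ) :
    ((outerSeries ψ T * innerSeries φ T).coeff s).coeff r = ψ (T.coeff s) * φ (T.coeff r) := by
  simp [innerSeries, outerSeries]

theorem coeff_yangMatrix_mul (p : B[X][X]) (r s : ℕ) :
    ((yangMatrix P * p).coeff (s + 1)).coeff (r + 1) =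
      (p.coeff s).coeff (r + 1) - (p.coeff (s + 1)).coeff r - P * (p.coeff s).coeff r := by
  simp [yangMatrix, sub_mul, mul_assoc, coeff_X_mul]

theorem coeff_mul_yangMatrix (p : B[X][X]) (r s : ℕ) :
    ((p * yangMatrix P).coeff (s + 1)).coeff (r + 1) =
      (p.coeff s).coeff (r + 1) - (p.coeff (s + 1)).coeff r - (p.coeff s).coeff r * P := by
  simp [yangMatrix, mul_sub, ← mul_assoc, coeff_mul_X]

theorem SatisfiesRTT.coeff_eq {T : S[X]} (hT : SatisfiesRTT φ ψ P T) (r s : ℕ) :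
    φ (T.coeff (r + 1)) * ψ (T.coeff s) - φ (T.coeff r) * ψ (T.coeff (s + 1)) -
        P * (φ (T.coeff r) * ψ (T.coeff s)) =
      ψ (T.coeff s) * φ (T.coeff (r + 1)) - ψ (T.coeff (s + 1)) * φ (T.coeff r) -
        ψ (T.coeff s) * φ (T.coeff r) * P := by
  simpa only [coeff_yangMatrix_mul, coeff_mul_yangMatrix, coeff_innerSeries_mul_outerSeries,
    coeff_outerSeries_mul_innerSeries] using
    congrArg (fun p => (p.coeff (s + 1)).coeff (r + 1)) hT.eq

end RTT

section Legs

variable {n : Type*} [DecidableEq n] [Fintype n] {A : Type*} [Ring A]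

/-- The embedding `m ↦ m ⊗ 1` of `n × n`-matrices into matrices indexed by pairs. -/
def leftLeg : Matrix n n A →+* Matrix (n × n) (n × n) A :=
  (Matrix.blockDiagonalRingHom n n A).comp (Pi.constRingHom n (Matrix n n A))

/-- The embedding `m ↦ 1 ⊗ m` of `n × n`-matrices into matrices indexed by pairs. -/
def rightLeg : Matrix n n A →+* Matrix (n × n) (n × n) A :=
  (Matrix.reindexAlgEquiv ℤ A (Equiv.prodComm n n)).toRingEquiv.toRingHom.comp leftLeg

variable (n A) in
/-- The matrix which exchanges the two tensor factors of `n`-vectors. -/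
def flipMatrix : Matrix (n × n) (n × n) A :=
  (1 : Matrix (n × n) (n × n) A).submatrix (Equiv.prodComm n n) (Equiv.refl _)

theorem leftLeg_apply (m : Matrix n n A) (i j k l : n) :
    leftLeg m (i, k) (j, l) = if k = l then m i j else 0 := by
  simp [leftLeg, Matrix.blockDiagonal_apply]

theorem rightLeg_apply (m : Matrix n n A) (i j k l : n) :
    rightLeg m (i, k) (j, l) = if i = j then m k l else 0 :=
  leftLeg_apply m k l i j

theorem leftLeg_mul_rightLeg_apply (m m' : Matrix n n A) (i j k l : n) :
    (leftLeg m * rightLeg m') (i, k) (j, l) = m i j * m' k l := by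
  simp [Matrix.mul_apply, Fintype.sum_prod_type, leftLeg_apply, rightLeg_apply]

theorem rightLeg_mul_leftLeg_apply (m m' : Matrix n n A) (i j k l : n) :
    (rightLeg m * leftLeg m') (i, k) (j, l) = m k l * m' i j := by
  simp [Matrix.mul_apply, Fintype.sum_prod_type, leftLeg_apply, rightLeg_apply]

theorem flipMatrix_mul_apply (m : Matrix (n × n) (n × n) A) (i k : n) (q : n × n) :
    (flipMatrix n A * m) (i, k) q = m (k, i) q := by
  rw [flipMatrix, Matrix.one_submatrix_mul]
  rfl

theorem mul_flipMatrix_apply (m : Matrix (n × n) (n × n) A) (q : n × n) (j l : n) :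
    (m * flipMatrix n A) q (j, l) = m q (l, j) := by
  rw [flipMatrix, Matrix.mul_submatrix_one]
  rfl

theorem flipMatrix_mul_leftLeg (m : Matrix n n A) :
    flipMatrix n A * leftLeg m = rightLeg m * flipMatrix n A := by
  ext ⟨i, k⟩ ⟨j, l⟩
  rw [flipMatrix_mul_apply, mul_flipMatrix_apply, leftLeg_apply, rightLeg_apply]

theorem flipMatrix_mul_rightLeg (m : Matrix n n A) :
    flipMatrix n A * rightLeg m = leftLeg m * flipMatrix n A := by
  ext ⟨i, k⟩ ⟨j, l⟩
  rw [flipMatrix_mul_apply, mul_flipMatrix_apply, leftLeg_apply, rightLeg_apply]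

theorem commute_leftLeg_rightLeg {m m' : Matrix n n A}
    (h : ∀ i j k l, Commute (m i j) (m' k l)) : Commute (leftLeg m) (rightLeg m') := by
  ext ⟨i, k⟩ ⟨j, l⟩
  rw [leftLeg_mul_rightLeg_apply, rightLeg_mul_leftLeg_apply, (h i j k l).eq]

/-- The entries of the matrix `e` satisfy the commutation relations of the matrix units of the Lie
algebra `gl_n`. -/
def IsGLMatrix (e : Matrix n n A) : Prop :=
  ∀ i j k l, e i j * e k l - e k l * e i j =
    (if j = k then e i l else 0) - (if l = i then e k j else 0)

theorem IsGLMatrix.leftLeg_mul_rightLeg_sub {e : Matrix n n A} (he : IsGLMatrix e) :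
    leftLeg e * rightLeg e - rightLeg e * leftLeg e =
      leftLeg e * flipMatrix n A - flipMatrix n A * leftLeg e := by
  ext ⟨i, k⟩ ⟨j, l⟩
  rw [Matrix.sub_apply, Matrix.sub_apply, leftLeg_mul_rightLeg_apply, rightLeg_mul_leftLeg_apply,
    mul_flipMatrix_apply, flipMatrix_mul_apply, leftLeg_apply, leftLeg_apply, he]
  simp only [eq_comm]

open Polynomial

theorem SatisfiesRTT.yangianRelations {T : (Matrix n n A)[X]}
    (hT : SatisfiesRTT leftLeg rightLeg (flipMatrix n A) T) (h0 : T.coeff 0 = 1) :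
    YangianRelations T.coeff where
  zero := h0
  comm r s i j k l := by
    have h := congrFun₂ (hT.coeff_eq r s) (i, k) (j, l)
    simp only [Matrix.sub_apply, flipMatrix_mul_apply, mul_flipMatrix_apply,
      leftLeg_mul_rightLeg_apply, rightLeg_mul_leftLeg_apply] at h
    rw [← sub_eq_zero] at h ⊢
    rw [← h]
    abel

theorem yangianRelations_list_prod {l : List (Matrix n n A)} (hl : ∀ e ∈ l, IsGLMatrix e)
    (hcomm : l.Pairwise fun e e' => ∀ i j k l, Commute (e i j) (e' k l)) :
    YangianRelations (l.map fun e => 1 + X * C e).prod.coeff := by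
  refine SatisfiesRTT.yangianRelations (.list_prod ?_ ?_) ?_
  · exact List.forall_mem_map.2 fun e he => satisfiesRTT_one_add_X_mul_C
      (hl e he).leftLeg_mul_rightLeg_sub (flipMatrix_mul_leftLeg e) (flipMatrix_mul_rightLeg e)
  · refine List.pairwise_map.2 (hcomm.imp fun h => ⟨?_, ?_⟩) <;>
      refine commute_innerSeries_outerSeries (commute_leftLeg_rightLeg fun i j k l => ?_)
    exacts [h i j k l, (h k l i j).symm]
  · rw [← constantCoeff_apply, map_list_prod, List.prod_eq_one]
    simp

end Legs

section Expansion

open Polynomial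

theorem strictMono_cons_zero_succ_comp {r k : ℕ} {p : Fin r → Fin k} (hp : StrictMono p) :
    StrictMono (Fin.cons 0 (Fin.succ ∘ p) : Fin (r + 1) → Fin (k + 1)) :=
  Fin.strictMono_cons.2 ⟨fun s => Fin.succ_pos (p s), Fin.strictMono_succ.comp hp⟩

theorem exists_eq_succ_comp_of_strictMono {r k : ℕ} {p : Fin r → Fin (k + 1)} (hp : StrictMono p)
    (h0 : ∀ s, p s ≠ 0) : ∃ q : Fin r → Fin k, StrictMono q ∧ p = Fin.succ ∘ q := by
  choose q hq using fun s => Fin.exists_succ_eq.2 (h0 s)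
  obtain rfl : p = Fin.succ ∘ q := funext fun s => (hq s).symm
  exact ⟨q, fun s s' hs => Fin.succ_lt_succ_iff.1 (hp hs), rfl⟩

theorem bijective_strictMono_succ (r k : ℕ) : Function.Bijective (Sum.elim
    (fun p : {p : Fin r → Fin k // StrictMono p} =>
      (⟨_, strictMono_cons_zero_succ_comp p.2⟩ : {p : Fin (r + 1) → Fin (k + 1) // StrictMono p}))
    fun p : {p : Fin (r + 1) → Fin k // StrictMono p} => ⟨_, Fin.strictMono_succ.comp p.2⟩) := by
  constructor
  · rintro (⟨p, hp⟩ | ⟨p, hp⟩) (⟨q, hq⟩ | ⟨q, hq⟩) h <;> rw [Subtype.ext_iff] at h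
    · obtain rfl : p = q := (Fin.succ_injective k).comp_left
        (Fin.cons_right_injective (α := fun _ => Fin (k + 1)) _ h)
      rfl
    · exact absurd (congrFun h 0).symm (Fin.succ_ne_zero _)
    · exact absurd (congrFun h 0) (Fin.succ_ne_zero _)
    · obtain rfl : p = q := (Fin.succ_injective k).comp_left h
      rfl
  · rintro ⟨p, hp⟩
    by_cases h0 : p 0 = 0
    · have tail_ne_zero (s : Fin r) : p s.succ ≠ 0 := (h0.symm.trans_lt (hp s.succ_pos)).ne'
      obtain ⟨q, hq, hpq⟩ :=
        exists_eq_succ_comp_of_strictMono (hp.comp Fin.strictMono_succ) tail_ne_zero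
      refine ⟨.inl ⟨q, hq⟩, Subtype.ext ?_⟩
      exact (congrArg₂ (Fin.cons (α := fun _ => Fin (k + 1))) h0.symm hpq.symm).trans
        (Fin.cons_self_tail p)
    · have ne_zero (s : Fin (r + 1)) : p s ≠ 0 := fun hs =>
        h0 (Fin.le_zero_iff.1 (hs ▸ hp.monotone s.zero_le))
      obtain ⟨q, hq, hpq⟩ := exists_eq_succ_comp_of_strictMono hp ne_zero
      exact ⟨.inr ⟨q, hq⟩, Subtype.ext hpq.symm⟩

theorem sum_strictMono_succ {S : Type*} [AddCommMonoid S] {r k : ℕ}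
    (F : (Fin (r + 1) → Fin (k + 1)) → S) :
    ∑ p : {p : Fin (r + 1) → Fin (k + 1) // StrictMono p}, F p =
      (∑ p : {p : Fin r → Fin k // StrictMono p}, F (Fin.cons 0 (Fin.succ ∘ p.1))) +
        ∑ p : {p : Fin (r + 1) → Fin k // StrictMono p}, F (Fin.succ ∘ p.1) :=
  ((bijective_strictMono_succ r k).sum_comp fun p => F p).symm.trans (Fintype.sum_sum_type _)

theorem coeff_list_prod_one_add_X_mul_C {S : Type*} [Ring S] {k : ℕ} (a : Fin k → S) (r : ℕ) :
    (List.ofFn fun p => 1 + X * C (a p)).prod.coeff r =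
      ∑ p : {p : Fin r → Fin k // StrictMono p}, (List.ofFn (a ∘ p.1)).prod := by
  induction k generalizing r with
  | zero => cases r <;> simp [Subsingleton.strictMono, coeff_one]
  | succ k ih =>
    rw [List.ofFn_succ, List.prod_cons, add_mul, one_mul, mul_assoc, coeff_add]
    cases r with
    | zero => simp [ih fun p => a p.succ, -X_mul_C, Subsingleton.strictMono]
    | succ r =>
      rw [coeff_X_mul, coeff_C_mul, ih fun p => a p.succ, ih fun p => a p.succ, Finset.mul_sum,
        add_comm, sum_strictMono_succ fun p => (List.ofFn (a ∘ p)).prod]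
      simp [List.ofFn_succ, Function.comp_def]

/-- A path from `i` to `j` with `r + 1` steps consists of its first step, to a vertex `a`, and of a
path from `a` to `j` with `r` steps. -/
def pathSuccEquiv {n : Type*} (r : ℕ) (i j : n) :
    {g : Fin (r + 2) → n // g 0 = i ∧ g (Fin.last (r + 1)) = j} ≃
      Σ a, {g : Fin (r + 1) → n // g 0 = a ∧ g (Fin.last r) = j} where
  toFun g := ⟨g.1 1, Fin.tail g.1, rfl, g.2.2⟩
  invFun x := ⟨Fin.cons i x.2.1, rfl, x.2.2.2⟩
  left_inv := by
    rintro ⟨g, rfl, rfl⟩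
    exact Subtype.ext (Fin.cons_self_tail g)
  right_inv := by
    rintro ⟨_, g, rfl, rfl⟩
    rfl

theorem list_prod_ofFn_apply {n A : Type*} [Fintype n] [DecidableEq n] [Semiring A] {r : ℕ}
    (m : Fin r → Matrix n n A) (i j : n) :
    (List.ofFn m).prod i j = ∑ g : {g : Fin (r + 1) → n // g 0 = i ∧ g (Fin.last r) = j},
      (List.ofFn fun s => m s (g.1 s.castSucc) (g.1 s.succ)).prod := by
  induction r generalizing i with
  | zero =>
    rcases eq_or_ne i j with rfl | hij
    · have eq_const (g : {g : Fin 1 → n // g 0 = i ∧ g (Fin.last 0) = i}) :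
          g = ⟨fun _ => i, rfl, rfl⟩ :=
        Subtype.ext (funext fun s => (congrArg g.1 (Subsingleton.elim s 0)).trans g.2.1)
      rw [Fintype.sum_eq_single ⟨fun _ => i, rfl, rfl⟩ fun g hg => absurd (eq_const g) hg]
      simp
    · rw [Finset.sum_eq_zero fun g _ => absurd (g.2.1.symm.trans g.2.2) hij]
      simp [hij]
  | succ r ih =>
    simp only [List.ofFn_succ, List.prod_cons, Matrix.mul_apply, ih, Finset.mul_sum]
    rw [← (pathSuccEquiv r i j).symm.sum_comp, Fintype.sum_sigma]
    refine Finset.sum_congr rfl fun a _ => Finset.sum_congr rfl fun g _ => ?_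
    simp [pathSuccEquiv, g.2.1]

end Expansion

section Slot

variable {ι R : Type*} [DecidableEq ι] [CommRing R] {V : ι → Type*} [∀ q, AddCommGroup (V q)]
  [∀ q, Module R (V q)]

/-- The operator on a tensor product which acts by `x` in the factor `q` and by the identity in the
remaining factors, as an algebra homomorphism in `x`. -/
noncomputable def slot (q : ι) : Module.End R (V q) →ₐ[R] Module.End R (⨂[R] q, V q) :=
  AlgHom.ofLinearMap ((PiTensorProduct.mapMultilinear R V V).toLinearMap 1 q)
    (by
      rw [MultilinearMap.toLinearMap_apply, ← Pi.mulSingle, Pi.mulSingle_one]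
      exact PiTensorProduct.map_one)
    fun x y => by
      rw [MultilinearMap.toLinearMap_apply, ← Pi.mulSingle, Pi.mulSingle_mul]
      exact PiTensorProduct.map_mul _ _

theorem slot_eq_map (q : ι) (x : Module.End R (V q)) :
    slot q x = PiTensorProduct.map (Pi.mulSingle q x) :=
  rfl

theorem slot_tprod (q : ι) (x : Module.End R (V q)) (v : ∀ q, V q) :
    slot q x (PiTensorProduct.tprod R v) =
      PiTensorProduct.tprod R (Function.update v q (x (v q))) := by
  rw [slot_eq_map, PiTensorProduct.map_tprod]
  congr 1
  funext q'
  rcases eq_or_ne q' q with rfl | hq <;> simp [*]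

theorem commute_slot {q q' : ι} (hq : q ≠ q') (x : Module.End R (V q)) (y : Module.End R (V q')) :
    Commute (slot q x) (slot q' y) := by
  have h := Pi.mulSingle_commute (f := fun q => Module.End R (V q)) hq x y
  exact h.map PiTensorProduct.mapMonoidHom

theorem list_prod_slot {r : ℕ} {p : Fin r → ι} (hp : Function.Injective p)
    (y : Fin r → ∀ q, Module.End R (V q)) :
    (List.ofFn fun s => slot (p s) (y s (p s))).prod = PiTensorProduct.map fun q =>
      if h : ∃ s, p s = q then y h.choose q else LinearMap.id := by
  have map_prod : (List.ofFn fun s => slot (p s) (y s (p s))).prod = PiTensorProduct.mapMonoidHom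
      (List.ofFn fun s => Pi.mulSingle (p s) (y s (p s))).prod := by
    rw [map_list_prod, List.map_ofFn]
    rfl
  rw [map_prod]
  refine congrArg PiTensorProduct.map (funext fun q => ?_)
  rw [Pi.list_prod_apply, List.map_ofFn, List.ofFn_eq_map]
  split_ifs with h
  · generalize hs₀ : h.choose = s₀
    obtain rfl : p s₀ = q := hs₀ ▸ h.choose_spec
    rw [List.prod_map_eq_pow_single s₀ _ fun s hs _ => by simp [hp.ne hs.symm],
      List.count_eq_one_of_mem (List.nodup_finRange r) (List.mem_finRange s₀)]
    simp
  · refine List.prod_eq_one (List.forall_mem_map.2 fun s _ => ?_)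
    exact Pi.mulSingle_eq_of_ne (fun hs => h ⟨s, hs.symm⟩) _

end Slot

theorem commute_list_prod_apply {n A ι : Type*} [Fintype n] [DecidableEq n] [Semiring A] {a : A}
    {m : ι → Matrix n n A} {l : List ι} (h : ∀ p ∈ l, ∀ i j, Commute a (m p i j)) (i j : n) :
    Commute a ((l.map m).prod i j) := by
  induction l generalizing i with
  | nil =>
    rw [List.map_nil, List.prod_nil, Matrix.one_apply]
    split_ifs <;> simp
  | cons p l ih =>
    rw [List.forall_mem_cons] at h
    rw [List.map_cons, List.prod_cons, Matrix.mul_apply]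
    exact .sum_right _ _ _ fun b _ => (h.1 i b).mul_right (ih h.2 b)

namespace IsHighestWeightAction

open Polynomial

section Slot

variable {n : Type*} [LT n] {R ι : Type*} [CommRing R] [DecidableEq ι] [Fintype ι]
  {V : ι → Type*} [∀ q, AddCommGroup (V q)] [∀ q, Module R (V q)]

theorem slot {v : ∀ q, V q} {f : ∀ q, V q →ₗ[R] R} {q : ι} {e : Matrix n n (Module.End R (V q))}
    {c : n → R} (h : IsHighestWeightAction e (v q) (f q) c) :
    IsHighestWeightAction (e.map (slot q)) (PiTensorProduct.tprod R v)
      (PiTensorProduct.lift ((MultilinearMap.mkPiAlgebra R ι R).compLinearMap f)) c where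
  raise i j hij := by
    rw [Matrix.map_apply, slot_tprod, h.raise i j hij, MultilinearMap.map_update_zero]
  diag i := by
    rw [Matrix.map_apply, slot_tprod, h.diag, MultilinearMap.map_update_smul,
      Function.update_eq_self]
  lower i j hij x := by
    induction x using PiTensorProduct.induction_on with
    | smul_tprod a v =>
      rw [map_smul, map_smul, Matrix.map_apply, slot_tprod, PiTensorProduct.lift.tprod]
      have : ∏ q', f q' (Function.update v q (e i j (v q)) q') = 0 :=
        Finset.prod_eq_zero (Finset.mem_univ q) (by simpa using h.lower i j hij (v q))
      simp [this]
    | add x y hx hy => rw [map_add, map_add, hx, hy, add_zero]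

end Slot

variable {n : Type*} [LinearOrder n] [DecidableEq n] [Fintype n] {R M : Type*} [CommRing R]
  [AddCommGroup M] [Module R M] {ξ : M} {f : M →ₗ[R] R}

theorem list_prod {ι : Type*} {m : ι → Matrix n n (Module.End R M)} {c : ι → n → R}
    {l : List ι} (hl : l.Nodup) (h : ∀ p, IsHighestWeightAction (m p) ξ f (c p))
    (hcomm : ∀ p q, p ≠ q → ∀ i j k l, Commute (m p i j) (m q k l)) :
    IsHighestWeightAction (l.map m).prod ξ f (l.map c).prod := by
  induction l with
  | nil => exact one
  | cons p l ih =>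
    rw [List.nodup_cons] at hl
    rw [List.map_cons, List.map_cons, List.prod_cons, List.prod_cons]
    refine (h p).mul (ih hl.2) fun i j => commute_list_prod_apply fun q hq => ?_
    exact hcomm p q (fun hpq => hl.1 (hpq ▸ hq)) i j

theorem coeff_prod_one_add_X_mul_C {k : ℕ} {m : Fin k → Matrix n n (Module.End R M)}
    {c : Fin k → n → R} (h : ∀ p, IsHighestWeightAction (m p) ξ f (c p))
    (hcomm : ∀ p q, p ≠ q → ∀ i j k l, Commute (m p i j) (m q k l)) (r : ℕ) :
    IsHighestWeightAction ((List.ofFn fun p => 1 + X * C (m p)).prod.coeff r) ξ f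
      ((∏ p, (1 + X * C (c p))).coeff r) := by
  rw [← List.prod_ofFn, coeff_list_prod_one_add_X_mul_C, coeff_list_prod_one_add_X_mul_C]
  refine sum fun p _ => ?_
  rw [← List.map_ofFn, ← List.map_ofFn]
  exact list_prod (List.nodup_ofFn.2 p.2.injective) h hcomm

end IsHighestWeightAction

section GeneralLinear

variable {n : Type*} [DecidableEq n] {R A : Type*} [CommRing R] [Ring A] [Algebra R A]
  {e : Matrix n n A}

theorem IsGLMatrix.almostCommute (he : IsGLMatrix e) :
    AlmostCommute R (fun x : n × n => e x.1 x.2) fun _ => 1 := by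
  have mem (i j : n) : e i j ∈ wordSpan R (fun x : n × n => e x.1 x.2) (fun _ => 1) 2 := by
    simpa using prod_mem_wordSpan (R := R) (a := fun x : n × n => e x.1 x.2) (deg := fun _ => 1)
      (w := [(i, j)]) (d := 2) (by simp)
  rintro ⟨i, j⟩ ⟨k, l⟩
  rw [he]
  refine sub_mem ?_ ?_ <;> split_ifs <;> simp only [mem, zero_mem]

theorem IsGLMatrix.weight_mul [Fintype n] (he : IsGLMatrix e) (w : n → R) (i j : n) :
    (∑ a, w a • e a a) * e i j = e i j * (∑ a, w a • e a a) + (w i - w j) • e i j := by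
  rw [← sub_eq_iff_eq_add', Finset.sum_mul, Finset.mul_sum, ← Finset.sum_sub_distrib]
  simp only [smul_mul_assoc, mul_smul_comm, ← smul_sub, he _ _ i j]
  simp [smul_sub, sub_smul]

theorem exists_hasEigenvalue_max_re {W : Type*} [AddCommGroup W] [Module ℂ W]
    [FiniteDimensional ℂ W] [Nontrivial W] (h : Module.End ℂ W) :
    ∃ ν, h.HasEigenvalue ν ∧ ∀ μ, h.HasEigenvalue μ → μ.re ≤ ν.re :=
  Set.exists_max_image _ Complex.re h.finite_hasEigenvalue h.exists_eigenvalue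

-- An eigenfunctional of the grading element `-∑ a, a • e a a` whose eigenvalue has maximal real
-- part is killed by the lowering operators, since these would increase the real part.
theorem IsGLMatrix.exists_lowest_functional {n : ℕ} {V : Type*} [AddCommGroup V] [Module ℂ V]
    [FiniteDimensional ℂ V] [Nontrivial V] {e : Matrix (Fin n) (Fin n) (Module.End ℂ V)}
    (he : IsGLMatrix e) :
    ∃ f : Module.Dual ℂ V, f ≠ 0 ∧ ∀ i j, j < i → ∀ v, f (e i j v) = 0 := by
  let grading : Module.End ℂ V := ∑ a : Fin n, (-a : ℂ) • e a a
  let dual : Module.End ℂ (Module.Dual ℂ V) := Module.Dual.transpose grading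
  obtain ⟨ν, hν, hmax⟩ := exists_hasEigenvalue_max_re dual
  obtain ⟨f, hf, hf0⟩ := hν.exists_hasEigenvector
  rw [Module.End.mem_eigenspace_iff] at hf
  refine ⟨f, hf0, fun i j hji => LinearMap.congr_fun (f := f ∘ₗ e i j) (g := 0) ?_⟩
  by_contra hne
  have raises : dual.HasEigenvalue (ν + (i - j)) := by
    refine Module.End.hasEigenvalue_of_hasEigenvector (x := f ∘ₗ e i j) ⟨?_, hne⟩
    rw [Module.End.mem_eigenspace_iff]
    ext v
    have hcomm : grading (e i j v) = e i j (grading v) + (-i - -j : ℂ) • e i j v :=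
      LinearMap.congr_fun (he.weight_mul (fun a : Fin n => (-a : ℂ)) i j) v
    have hfv : f (grading (e i j v)) = ν * f (e i j v) := LinearMap.congr_fun hf (e i j v)
    rw [hcomm, map_add, map_smul, smul_eq_mul] at hfv
    change f (e i j (grading v)) = (ν + (i - j)) * f (e i j v)
    linear_combination hfv
  have hle := hmax _ raises
  have hlt : (j : ℝ) < i := by exact_mod_cast hji
  simp only [Complex.add_re, Complex.sub_re, Complex.natCast_re] at hle
  linarith

theorem GLRep.isGLMatrix {n : ℕ} {lam : Fin n → ℂ} (M : GLRep n lam) :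
    IsGLMatrix (Matrix.of M.E) :=
  M.commRel

theorem GLRep.exists_functional {n : ℕ} {lam : Fin n → ℂ} (M : GLRep n lam) :
    ∃ f : M.V →ₗ[ℂ] ℂ, IsHighestWeightAction (Matrix.of M.E) M.hv f lam ∧ f M.hv = 1 := by
  have : Nontrivial M.V := ⟨M.hv, 0, M.hv_ne⟩
  obtain ⟨f, hf0, hf⟩ := M.isGLMatrix.exists_lowest_functional
  have f_hv_ne_zero : f M.hv ≠ 0 := by
    intro hfv
    have letters : ∀ x : Fin n × Fin n,
        (∃ c : ℂ, M.E x.1 x.2 M.hv = c • M.hv) ∨ f ∘ₗ M.E x.1 x.2 = 0 := by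
      rintro ⟨i, j⟩
      rcases lt_trichotomy i j with hij | rfl | hji
      · exact .inl ⟨0, by simp [M.hv_upper i j hij]⟩
      · exact .inl ⟨lam i, M.hv_diag i⟩
      · exact .inr (LinearMap.ext (hf i j hji))
    have hirr : ActsIrreducibly fun x : Fin n × Fin n => M.E x.1 x.2 := fun U hU =>
      M.irreducible U fun i j => hU (i, j)
    have hle := M.isGLMatrix.almostCommute.cyclicSpan_le_ker letters hfv
    have htop := hirr.cyclicSpan_eq_top M.hv_ne
    exact hf0 (LinearMap.ker_eq_top.1 (top_le_iff.1 (htop.ge.trans hle)))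
  refine ⟨(f M.hv)⁻¹ • f, ⟨M.hv_upper, M.hv_diag, fun i j hji v => ?_⟩, ?_⟩
  · exact smul_eq_zero_of_right (f M.hv)⁻¹ (hf i j hji v)
  · simp [f_hv_ne_zero]

end GeneralLinear

section Monodromy

open Polynomial

variable {k n : ℕ} {lam : Fin k → Fin n → ℂ} (M : ∀ p : Fin k, GLRep n (lam p))

/-- The matrix of the operators by which the matrix units of `gl_n` act in the `p`-th factor of
`L(λ^{(1)}) ⊗ ⋯ ⊗ L(λ^{(k)})`. -/
noncomputable def factorMatrix (p : Fin k) :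
    Matrix (Fin n) (Fin n) (Module.End ℂ (⨂[ℂ] q, (M q).V)) :=
  (Matrix.of (M p).E).map (slot (V := fun q => (M q).V) p)

/-- The generating polynomial `T(x) = ∑ r, t^{(r)} x ^ r` of the matrices of Yangian generators
acting on `L(λ^{(1)}) ⊗ ⋯ ⊗ L(λ^{(k)})`, as the product of the polynomials of its factors. -/
noncomputable def monodromy : (Matrix (Fin n) (Fin n) (Module.End ℂ (⨂[ℂ] q, (M q).V)))[X] :=
  (List.ofFn fun p => 1 + X * C (factorMatrix M p)).prod

theorem isGLMatrix_factorMatrix (p : Fin k) : IsGLMatrix (factorMatrix M p) := by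
  intro i j a b
  have h := congrArg (slot (V := fun q => (M q).V) p) ((M p).isGLMatrix i j a b)
  simpa only [factorMatrix, Matrix.map_apply, map_sub, map_mul, apply_ite (slot p),
    map_zero] using h

theorem commute_factorMatrix {p q : Fin k} (hpq : p ≠ q) (i j a b : Fin n) :
    Commute (factorMatrix M p i j) (factorMatrix M q a b) :=
  commute_slot hpq _ _

theorem coeff_monodromy_apply (r : ℕ) (i j : Fin n) :
    (monodromy M).coeff r i j = tMulti M r i j := by
  rw [monodromy, coeff_list_prod_one_add_X_mul_C, Matrix.sum_apply, tMulti]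
  refine Finset.sum_congr rfl fun p _ => ?_
  rw [list_prod_ofFn_apply]
  refine Finset.sum_congr (by congr!) fun g _ => ?_
  exact list_prod_slot p.2.injective fun s q => (M q).E (g.1 s.castSucc) (g.1 s.succ)

theorem yangianRelations_monodromy : YangianRelations (monodromy M).coeff := by
  have h := yangianRelations_list_prod (l := List.ofFn (factorMatrix M))
    (List.forall_mem_ofFn_iff.2 (isGLMatrix_factorMatrix M))
    (List.pairwise_ofFn.2 fun p q hpq => commute_factorMatrix M hpq.ne)
  rwa [List.map_ofFn] at h

theorem exists_functional_monodromy :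
    ∃ F : (⨂[ℂ] q, (M q).V) →ₗ[ℂ] ℂ, F (PiTensorProduct.tprod ℂ fun q => (M q).hv) = 1 ∧
      ∀ r, IsHighestWeightAction ((monodromy M).coeff r) (PiTensorProduct.tprod ℂ fun q => (M q).hv)
        F ((∏ p, (1 + X * C (lam p))).coeff r) := by
  choose f hf hf1 using fun q => (M q).exists_functional
  refine ⟨PiTensorProduct.lift ((MultilinearMap.mkPiAlgebra ℂ (Fin k) ℂ).compLinearMap f), ?_, ?_⟩
  · simp [hf1]
  · exact IsHighestWeightAction.coeff_prod_one_add_X_mul_C (fun p => (hf p).slot)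
      fun p q hpq => commute_factorMatrix M hpq

theorem YangianIrredMulti.actsIrreducibly {M : ∀ p : Fin k, GLRep n (lam p)}
    (hM : YangianIrredMulti M) : ActsIrreducibly fun x : ℕ × Fin n × Fin n =>
      (monodromy M).coeff x.1 x.2.1 x.2.2 := by
  refine fun U hU => hM U fun r _ i j => ?_
  rw [← coeff_monodromy_apply]
  exact hU (r, i, j)

end Monodromy

/-- If the `Y(gl_n)`-module `L(λ^{(1)}) ⊗ ⋯ ⊗ L(λ^{(k)})` is
irreducible, then any permutation of the tensor factors gives an isomorphic
representation of `Y(gl_n)`: there is a linear isomorphism intertwining the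
actions of all Yangian generators `t_{ij}^{(r)}`. -/
theorem tensorMulti_permute_isomorphic
    (k n : ℕ) (lam : Fin k → Fin n → ℂ)
    (hlam : ∀ p : Fin k, IsGLHighestWeight n (lam p))
    (M : ∀ p : Fin k, GLRep n (lam p))
    (hirr : YangianIrredMulti M) (σ : Equiv.Perm (Fin k)) :
    ∃ φ : (⨂[ℂ] p : Fin k, (M p).V) ≃ₗ[ℂ] ⨂[ℂ] p : Fin k, (M (σ p)).V,
      ∀ r : ℕ, 1 ≤ r → ∀ i j : Fin n, ∀ x : ⨂[ℂ] p : Fin k, (M p).V,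
        φ (tMulti M r i j x) = tMulti (fun p : Fin k => M (σ p)) r i j (φ x) := by
  have finrank_eq : Module.finrank ℂ (⨂[ℂ] p, (M p).V) = Module.finrank ℂ (⨂[ℂ] p, (M (σ p)).V) :=
    (PiTensorProduct.reindex ℂ (fun p => (M p).V) σ.symm).finrank_eq
  obtain ⟨F, hF, hw⟩ := exists_functional_monodromy M
  obtain ⟨F', hF', hw'⟩ := exists_functional_monodromy fun p => M (σ p)
  have weight_perm := Equiv.prod_comp σ fun p => 1 + Polynomial.X * Polynomial.C (lam p)
  rw [weight_perm] at hw'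
  obtain ⟨φ, hφ⟩ := exists_equiv_of_highestWeight finrank_eq (yangianRelations_monodromy M)
    (yangianRelations_monodromy fun p => M (σ p)) hw hw' hF hF' hirr.actsIrreducibly
  refine ⟨φ, fun r _ i j x => ?_⟩
  simpa only [coeff_monodromy_apply] using hφ r i j x
end

section
/- Let λ and μ be gl_n-highest weights with integer entries. The sets A_λ \ A_μ and A_μ \ A_λ are non-crossing if and only if for all pairs of indices 1 ≤ i < j ≤ n one has: either (m_j ∉ ⟨l_j, l_i⟩ and m_i ∉ ⟨l_j, l_i⟩) or (l_j ∉ ⟨m_j, m_i⟩ and l_i ∉ ⟨m_j, m_i⟩). -/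
/-- The shifted weight `l_i = λ_i − i + 1` (with `0`-indexed entries:
`l i = lam i - i`). -/
def lshift (n : ℕ) (lam : Fin n → ℤ) : Fin n → ℤ :=
  fun i => lam i - ((i : ℕ) : ℤ)

/-- The set `A_λ = {λ_1, λ_2 − 1, …, λ_n − n + 1}`. -/
def Aset (n : ℕ) (lam : Fin n → ℤ) : Finset ℤ :=
  Finset.image (lshift n lam) Finset.univ

/-- Two finite subsets `A`, `B` of `ℤ` are crossing if there are
`a₁, a₂ ∈ A` and `b₁, b₂ ∈ B` with `a₁ < b₁ < a₂ < b₂` or `b₁ < a₁ < b₂ < a₂`. -/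
def CrossingSets (A B : Finset ℤ) : Prop :=
  (∃ a₁ ∈ A, ∃ a₂ ∈ A, ∃ b₁ ∈ B, ∃ b₂ ∈ B, a₁ < b₁ ∧ b₁ < a₂ ∧ a₂ < b₂) ∨
  (∃ a₁ ∈ A, ∃ a₂ ∈ A, ∃ b₁ ∈ B, ∃ b₂ ∈ B, b₁ < a₁ ∧ a₁ < b₂ ∧ b₂ < a₂)

/-- The set `⟨l_j, l_i⟩ = {l_j, l_j + 1, …, l_i} \ {l_s : i ≤ s ≤ j}` for a
pair of indices `i < j`. -/
def bracketZ (n : ℕ) (l : Fin n → ℤ) (i j : Fin n) : Set ℤ :=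
  {x | l j ≤ x ∧ x ≤ l i ∧ ∀ s : Fin n, i ≤ s → s ≤ j → x ≠ l s}

/-- The condition `m_j, m_i ∉ ⟨l_j, l_i⟩ or l_j, l_i ∉ ⟨m_j, m_i⟩` for a pair
of indices `i < j`. -/
def SepCondZ (n : ℕ) (lam mu : Fin n → ℤ) (i j : Fin n) : Prop :=
  (lshift n mu j ∉ bracketZ n (lshift n lam) i j ∧
      lshift n mu i ∉ bracketZ n (lshift n lam) i j) ∨
  (lshift n lam j ∉ bracketZ n (lshift n mu) i j ∧
      lshift n lam i ∉ bracketZ n (lshift n mu) i j)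

/-! Orient index `i` upwards if `l i < m i` and downwards if `m i < l i`. Separation fails exactly
at pairs `i < j` whose intervals between `l` and `m` are disjoint and oriented the same way, with
each inner endpoint in only one of the two families: `l j < m j < l i < m i`, or the same with `l`
and `m` swapped.

The tool is a descent along `range l ∩ range m`. If `l i < m i` and `m i = l t`, then `t < i` and
again `l t < m t`, so on a well-founded index type one reaches an upward index whose `m`-value is
not in `range l`; the descent stays above every index `q < i` with `m q ≤ l q`. Applied to both
ends of a failing pair, the descent completes `m j < l i` to an alternating quadruple. Conversely,
in an alternating quadruple `l p < m q < l r < m s`, either `(q, p)` or `(s, r)` is a failing pair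
of downward indices, or the descent gives upward indices `t` and `u` with `m t ≤ m q` and
`l r ≤ l u`, so that `(u, t)` is a failing pair. -/

section StrictAntiFamilies

open Set OrderDual

variable {ι α : Type*} [LinearOrder ι] [LinearOrder α] {l m : ι → α}

/-- There are `a₁ < b₁ < a₂ < b₂` with `a₁, a₂ ∈ A` and `b₁, b₂ ∈ B`. Two sets are crossing when
this holds in one of the two orders. -/
def Alternates (A B : Set α) : Prop :=
  ∃ a₁ ∈ A, ∃ b₁ ∈ B, ∃ a₂ ∈ A, ∃ b₂ ∈ B, a₁ < b₁ ∧ b₁ < a₂ ∧ a₂ < b₂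

/-- The bracket `⟨l j, l i⟩` of a family in an arbitrary linear order. -/
def bracket (l : ι → α) (i j : ι) : Set α :=
  Icc (l j) (l i) \ l '' Icc i j

/-- The separation condition at `i`, `j` for families in an arbitrary linear order. -/
def SepCond (l m : ι → α) (i j : ι) : Prop :=
  (m j ∉ bracket l i j ∧ m i ∉ bracket l i j) ∨ (l j ∉ bracket m i j ∧ l i ∉ bracket m i j)

/-- One of the two ways in which the separation condition can fail for strictly decreasing families,
namely `l j < m j < l i < m i` with the inner two values belonging to one family only; the other
way is `SepViolation m l i j`. -/
def SepViolation (l m : ι → α) (i j : ι) : Prop :=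
  m j ∈ bracket l i j ∧ l i ∈ bracket m i j

theorem mem_bracket_iff (hl : StrictAnti l) {i j : ι} {x : α} :
    x ∈ bracket l i j ↔ l j < x ∧ x < l i ∧ x ∉ range l := by
  constructor
  · rintro ⟨⟨hjx, hxi⟩, hx⟩
    have hx_range : x ∉ range l := by
      rintro ⟨s, rfl⟩
      exact hx ⟨s, ⟨hl.le_iff_ge.1 hxi, hl.le_iff_ge.1 hjx⟩, rfl⟩
    exact ⟨hjx.lt_of_ne fun h => hx_range ⟨j, h⟩, hxi.lt_of_ne fun h => hx_range ⟨i, h.symm⟩,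
      hx_range⟩
  · rintro ⟨hjx, hxi, hx⟩
    exact ⟨⟨hjx.le, hxi.le⟩, fun h => hx (image_subset_range _ _ h)⟩

theorem sepViolation_iff (hl : StrictAnti l) (hm : StrictAnti m) {i j : ι} :
    SepViolation l m i j ↔
      l j < m j ∧ m j < l i ∧ l i < m i ∧ m j ∉ range l ∧ l i ∉ range m := by
  rw [SepViolation, mem_bracket_iff hl, mem_bracket_iff hm]
  tauto

theorem SepViolation.lt (hl : StrictAnti l) {i j : ι} (h : SepViolation l m i j) : i < j := by
  obtain ⟨hj, hi, -⟩ := (mem_bracket_iff hl).1 h.1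
  exact hl.lt_iff_gt.1 (hj.trans hi)

theorem not_sepCond_iff (hl : StrictAnti l) (hm : StrictAnti m) {i j : ι} :
    ¬ SepCond l m i j ↔ SepViolation l m i j ∨ SepViolation m l i j := by
  have upper_not_both : ¬ (m i ∈ bracket l i j ∧ l i ∈ bracket m i j) := fun ⟨hmi, hli⟩ =>
    ((mem_bracket_iff hl).1 hmi).2.1.not_gt ((mem_bracket_iff hm).1 hli).2.1
  have lower_not_both : ¬ (m j ∈ bracket l i j ∧ l j ∈ bracket m i j) := fun ⟨hmj, hlj⟩ =>
    ((mem_bracket_iff hl).1 hmj).1.not_gt ((mem_bracket_iff hm).1 hlj).1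
  unfold SepCond SepViolation
  tauto

theorem exists_le_notMem_range [WellFoundedLT ι] (hl : StrictAnti l) (hm : StrictAnti m) {i : ι}
    (hi : l i < m i) :
    ∃ s ≤ i, l s < m s ∧ m s ∉ range l ∧ ∀ q < i, m q ≤ l q → q < s := by
  induction i using WellFoundedLT.induction with
  | ind i ih =>
    by_cases hmi : m i ∈ range l
    · obtain ⟨t, ht⟩ := hmi
      have hti : t < i := hl.lt_iff_gt.1 (hi.trans_eq ht.symm)
      have htm : l t < m t := ht.trans_lt (hm hti)
      obtain ⟨s, hst, hs, hs_range, hs_last⟩ := ih t hti htm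
      refine ⟨s, hst.trans hti.le, hs, hs_range, fun q hqi hq => hs_last q ?_ hq⟩
      exact hl.lt_iff_gt.1 <| calc
        l t = m i := ht
        _ < m q := hm hqi
        _ ≤ l q := hq
    · exact ⟨i, le_rfl, hi, hmi, fun q hqi _ => hqi⟩

theorem exists_ge_notMem_range [WellFoundedGT ι] (hl : StrictAnti l) (hm : StrictAnti m) {j : ι}
    (hj : l j < m j) :
    ∃ s ≥ j, l s < m s ∧ l s ∉ range m ∧ ∀ q > j, m q ≤ l q → s < q :=
  exists_le_notMem_range (l := toDual ∘ m ∘ ofDual) (m := toDual ∘ l ∘ ofDual) (i := toDual j)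
    hm.dual hl.dual hj

theorem SepViolation.alternates [Finite ι] (hl : StrictAnti l)
    (hm : StrictAnti m) {i j : ι} (h : SepViolation l m i j) :
    Alternates (range l \ range m) (range m \ range l) := by
  obtain ⟨hj, hji, hi, hj_range, hi_range⟩ := (sepViolation_iff hl hm).1 h
  obtain ⟨s, hjs, -, hs_range, -⟩ := exists_ge_notMem_range hl hm hj
  obtain ⟨t, hti, -, ht_range, -⟩ := exists_le_notMem_range hl hm hi
  exact ⟨l s, ⟨mem_range_self s, hs_range⟩, m j, ⟨mem_range_self j, hj_range⟩,
    l i, ⟨mem_range_self i, hi_range⟩, m t, ⟨mem_range_self t, ht_range⟩,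
    (hl.antitone hjs).trans_lt hj, hji, hi.trans_le (hm.antitone hti)⟩

theorem sepViolation_or_exists_le [WellFoundedLT ι] (hl : StrictAnti l) (hm : StrictAnti m)
    {p q : ι} (hp : l p ∉ range m) (hq : m q ∉ range l) (hpq : l p < m q) :
    SepViolation m l q p ∨ ∃ t, l t < m t ∧ m t ∉ range l ∧ m t ≤ m q := by
  rcases lt_or_ge (l q) (m q) with hq_up | hq_down
  · exact .inr ⟨q, hq_up, hq, le_rfl⟩
  rcases lt_or_ge (l p) (m p) with hp_up | hp_down
  · have hqp : q < p := hl.lt_iff_gt.1 (hpq.trans_le hq_down)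
    obtain ⟨t, -, ht, ht_range, ht_last⟩ := exists_le_notMem_range hl hm hp_up
    exact .inr ⟨t, ht, ht_range, (hm (ht_last q hqp hq_down)).le⟩
  · exact .inl <| (sepViolation_iff hm hl).2
      ⟨hp_down.lt_of_ne fun h => hp ⟨p, h⟩, hpq, hq_down.lt_of_ne fun h => hq ⟨q, h.symm⟩, hp, hq⟩

theorem sepViolation_or_exists_ge [WellFoundedGT ι] (hl : StrictAnti l) (hm : StrictAnti m)
    {r s : ι} (hr : l r ∉ range m) (hs : m s ∉ range l) (hrs : l r < m s) :
    SepViolation m l s r ∨ ∃ u, l u < m u ∧ l u ∉ range m ∧ l r ≤ l u := by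
  rcases lt_or_ge (l r) (m r) with hr_up | hr_down
  · exact .inr ⟨r, hr_up, hr, le_rfl⟩
  rcases lt_or_ge (l s) (m s) with hs_up | hs_down
  · have hsr : s < r := hm.lt_iff_gt.1 (hr_down.trans_lt hrs)
    obtain ⟨u, -, hu, hu_range, hu_first⟩ := exists_ge_notMem_range hl hm hs_up
    exact .inr ⟨u, hu, hu_range, (hl (hu_first r hsr hr_down)).le⟩
  · exact .inl <| (sepViolation_iff hm hl).2
      ⟨hr_down.lt_of_ne fun h => hr ⟨r, h⟩, hrs, hs_down.lt_of_ne fun h => hs ⟨s, h.symm⟩, hr, hs⟩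

theorem Alternates.exists_not_sepCond [Finite ι] (hl : StrictAnti l)
    (hm : StrictAnti m) (h : Alternates (range l \ range m) (range m \ range l)) :
    ∃ i j, i < j ∧ ¬ SepCond l m i j := by
  obtain ⟨_, ⟨⟨p, rfl⟩, hp⟩, _, ⟨⟨q, rfl⟩, hq⟩, _, ⟨⟨r, rfl⟩, hr⟩, _, ⟨⟨s, rfl⟩, hs⟩,
    hpq, hqr, hrs⟩ := h
  rcases sepViolation_or_exists_le hl hm hp hq hpq with hv | ⟨t, ht, ht_range, htq⟩
  · exact ⟨q, p, hv.lt hm, (not_sepCond_iff hl hm).2 (.inr hv)⟩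
  rcases sepViolation_or_exists_ge hl hm hr hs hrs with hv | ⟨u, hu, hu_range, hru⟩
  · exact ⟨s, r, hv.lt hm, (not_sepCond_iff hl hm).2 (.inr hv)⟩
  have hv : SepViolation l m u t :=
    (sepViolation_iff hl hm).2 ⟨ht, htq.trans_lt (hqr.trans_le hru), hu, ht_range, hu_range⟩
  exact ⟨u, t, hv.lt hl, (not_sepCond_iff hl hm).2 (.inl hv)⟩

theorem sepCond_comm {i j : ι} : SepCond l m i j ↔ SepCond m l i j :=
  or_comm

theorem nonCrossing_iff_sepCond_general [Finite ι] (hl : StrictAnti l)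
    (hm : StrictAnti m) :
    ¬ (Alternates (range l \ range m) (range m \ range l) ∨
        Alternates (range m \ range l) (range l \ range m)) ↔
      ∀ i j, i < j → SepCond l m i j := by
  constructor
  · intro h i j _
    by_contra hsep
    exact h <| ((not_sepCond_iff hl hm).1 hsep).imp (·.alternates hl hm) (·.alternates hm hl)
  · rintro hsep (h | h)
    · obtain ⟨i, j, hij, hn⟩ := h.exists_not_sepCond hl hm
      exact hn (hsep i j hij)
    · obtain ⟨i, j, hij, hn⟩ := h.exists_not_sepCond hm hl
      exact hn (sepCond_comm.1 (hsep i j hij))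

end StrictAntiFamilies

theorem lshift_strictAnti {n : ℕ} {lam : Fin n → ℤ}
    (hlam : ∀ i : Fin n, ∀ h : (i : ℕ) + 1 < n, 0 ≤ lam i - lam ⟨(i : ℕ) + 1, h⟩) :
    StrictAnti (lshift n lam) := by
  cases n with
  | zero => exact Subsingleton.strictAnti _
  | succ n =>
    refine Fin.strictAnti_iff_succ_lt.2 fun i => ?_
    have hi : lam i.succ ≤ lam i.castSucc :=
      sub_nonneg.1 (hlam i.castSucc (Nat.succ_lt_succ i.isLt))
    simp only [lshift, Fin.val_succ, Fin.val_castSucc]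
    omega

theorem coe_Aset_sdiff (n : ℕ) (lam mu : Fin n → ℤ) :
    ((Aset n lam \ Aset n mu : Finset ℤ) : Set ℤ) =
      Set.range (lshift n lam) \ Set.range (lshift n mu) := by
  simp [Aset]

theorem crossingSets_iff {A B : Finset ℤ} :
    CrossingSets A B ↔ Alternates (A : Set ℤ) B ∨ Alternates (B : Set ℤ) A := by
  simp only [CrossingSets, Alternates, Finset.mem_coe]
  constructor
  · rintro (⟨a₁, ha₁, a₂, ha₂, b₁, hb₁, b₂, hb₂, h⟩ | ⟨a₁, ha₁, a₂, ha₂, b₁, hb₁, b₂, hb₂, h⟩)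
    · exact .inl ⟨a₁, ha₁, b₁, hb₁, a₂, ha₂, b₂, hb₂, h⟩
    · exact .inr ⟨b₁, hb₁, a₁, ha₁, b₂, hb₂, a₂, ha₂, h⟩
  · rintro (⟨a₁, ha₁, b₁, hb₁, a₂, ha₂, b₂, hb₂, h⟩ | ⟨b₁, hb₁, a₁, ha₁, b₂, hb₂, a₂, ha₂, h⟩)
    · exact .inl ⟨a₁, ha₁, a₂, ha₂, b₁, hb₁, b₂, hb₂, h⟩
    · exact .inr ⟨a₁, ha₁, a₂, ha₂, b₁, hb₁, b₂, hb₂, h⟩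

theorem bracketZ_eq_bracket (n : ℕ) (l : Fin n → ℤ) (i j : Fin n) :
    bracketZ n l i j = bracket l i j := by
  ext x
  simp only [bracketZ, bracket, Set.mem_ofPred_eq, Set.mem_sdiff, Set.mem_Icc, Set.mem_image,
    not_exists, not_and, and_assoc, eq_comm, ne_eq]

theorem sepCondZ_iff {n : ℕ} {lam mu : Fin n → ℤ} {i j : Fin n} :
    SepCondZ n lam mu i j ↔ SepCond (lshift n lam) (lshift n mu) i j := by
  simp only [SepCondZ, SepCond, bracketZ_eq_bracket]

/-- For `gl_n`-highest weights `λ`, `μ` with integer entries,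
the sets `A_λ \ A_μ` and `A_μ \ A_λ` are non-crossing if and only if for all
pairs `i < j` the separation condition holds. -/
theorem nonCrossing_iff_sepCond
    (n : ℕ) (lam mu : Fin n → ℤ)
    (hlam : ∀ i : Fin n, ∀ h : (i : ℕ) + 1 < n, 0 ≤ lam i - lam ⟨(i : ℕ) + 1, h⟩)
    (hmu : ∀ i : Fin n, ∀ h : (i : ℕ) + 1 < n, 0 ≤ mu i - mu ⟨(i : ℕ) + 1, h⟩) :
    ¬ CrossingSets (Aset n lam \ Aset n mu) (Aset n mu \ Aset n lam) ↔
      ∀ i j : Fin n, i < j → SepCondZ n lam mu i j := by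
  simpa only [crossingSets_iff, coe_Aset_sdiff, sepCondZ_iff] using
    nonCrossing_iff_sepCond_general (lshift_strictAnti hlam) (lshift_strictAnti hmu)
end
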